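/- Let F : ℝ^d → ℝ^d be L-Lipschitz with L > 0 and have a weak Minty solution u* with parameter ρ > 0. Let (u_k, ū_k, a_k) be generated by the adaptive EG+ method with γ = 1/2, τ ∈ (0,1) and a₀ ≥ τ/L, and let a_∞ denote the limit of the nonincreasing, bounded-below sequence (a_k). If a_∞ > 2ρ, then there exists k₀ ∈ ℕ such that for all k > k₀: min_{k₀ ≤ i ≤ k} ‖F(u_i)‖² ≤ (1/(k − k₀))·(L/(τ·(a_∞/2 − ρ)))·‖ū_{k₀} − u*‖². -/

import Mathlib

open scoped RealInnerProductSpace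

open Filter Topology

/-!
Once the step sizes have nearly stabilized, `D k = ‖ubar k - z‖ ^ 2` satisfies
`c * ‖F (u k)‖ ^ 2 ≤ D k - D (k + 1)` with `c = γ * ainf * ((1 - γ) * ainf - ρ)`, where
`ainf ≥ τ / L`. If `ainf = τ / L`, telescoping from an arbitrary starting index loses a factor `2`
against the required bound, so the starting index has to be chosen: some `k₀` satisfies
`2 * (k - k₀) * h ≤ D k₀` whenever all decrements of `D` on `[k₀, k]` are at least `h`.

Suppose that every index violates this, so that it is the left end of a *wide rectangle*: height
`h`, right end `x`, and an area of more than half of the total decrement still available. From each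
wide rectangle one reaches another one with right end `x₂ > x`. In the process `D (x + 1) / h`, the
number of further steps that a constant decrement `h` would allow, drops by at least
`(h / h₂ - 1) / 2` when the height falls to `h₂`. Hence `D (x + 1) / h - log h / 2` never increases
and the heights stay away from `0`, although the decrements of `D` tend to `0`.
-/

section WideRectangle

variable {D : ℕ → ℝ} {k x : ℕ} {h : ℝ}

theorem mul_le_sub_of_forall_le_sub_succ {m n : ℕ} (hmn : m ≤ n)
    (hD : ∀ i ∈ Set.Ico m n, h ≤ D i - D (i + 1)) : ((n : ℝ) - m) * h ≤ D m - D n := by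
  have hsum := Finset.card_nsmul_le_sum (Finset.Ico m n) (fun i => D i - D (i + 1)) h
    fun i hi => hD i (Finset.mem_Ico.1 hi)
  have htel := Finset.sum_Ico_sub D hmn
  rw [Finset.sum_sub_distrib] at hsum htel
  rw [Nat.card_Ico, nsmul_eq_mul, Nat.cast_sub hmn] at hsum
  linarith

theorem tendsto_sub_succ_of_antitone (hD : ∀ k, 0 ≤ D k) (hanti : Antitone D) :
    Tendsto (fun i => D i - D (i + 1)) atTop (𝓝 0) := by
  have hconv := tendsto_atTop_ciInf hanti ⟨0, Set.forall_mem_range.2 hD⟩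
  simpa using hconv.sub (hconv.comp (tendsto_add_atTop_nat 1))

/-- A rectangle over `[k, x]` of height `h > 0` that fits below the decrements of `D` and whose area
exceeds half of `D k`, the bound for all decrements from `k` on. The rectangle covers `x - k + 1`
decrements but its width is taken to be `x - k`. -/
structure IsWideRectangle (D : ℕ → ℝ) (k x : ℕ) (h : ℝ) : Prop where
  height_pos : 0 < h
  height_le : ∀ i ∈ Set.Icc k x, h ≤ D i - D (i + 1)
  lt_area : D k < 2 * ((x : ℝ) - k) * h

/-- The quantity that does not increase along a suitable succession of wide rectangles with right
end `x` and height `h`. -/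
noncomputable def rectanglePotential (D : ℕ → ℝ) (x : ℕ) (h : ℝ) : ℝ :=
  D (x + 1) / h - Real.log h / 2

theorem exp_neg_two_mul_rectanglePotential_le (hD : 0 ≤ D (x + 1)) (hh : 0 < h) :
    Real.exp (-2 * rectanglePotential D x h) ≤ h := by
  rw [← Real.le_log_iff_exp_le hh, rectanglePotential]
  linarith [div_nonneg hD hh.le]

theorem div_sub_log_le_of_area_bounds {R R₂ T h₂ q w : ℝ} (hh : 0 < h) (hh₂ : 0 < h₂)
    (hR : 0 ≤ R) (hw : 0 ≤ w) (hRT : 2 * R + h ≤ T) (hTq : 2 * q * h ≤ T)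
    (hTw : T ≤ 2 * (q + w) * h₂) (hR₂ : R₂ ≤ R - w * h₂) :
    R₂ / h₂ - Real.log h₂ / 2 ≤ R / h - Real.log h / 2 := by
  have hdrop : R₂ / h₂ ≤ R / h₂ - w := by
    rw [div_le_iff₀ hh₂, sub_mul, div_mul_cancel₀ _ hh₂.ne']
    exact hR₂
  rcases le_total h h₂ with hle | hle
  · have hdiv : R / h₂ ≤ R / h := div_le_div_of_nonneg_left hR hh hle
    have hlog : Real.log h ≤ Real.log h₂ := Real.log_le_log hh hle
    linarith
  · have hw_ge : T / 2 * (1 / h₂ - 1 / h) ≤ w := by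
      have hq : q ≤ T / 2 / h := (le_div_iff₀ hh).2 (by linarith)
      have hqw : T / 2 / h₂ ≤ q + w := (div_le_iff₀ hh₂).2 (by linarith)
      rw [mul_sub, mul_one_div, mul_one_div]
      linarith
    have hRT' : (R + h / 2) * (1 / h₂ - 1 / h) ≤ T / 2 * (1 / h₂ - 1 / h) :=
      mul_le_mul_of_nonneg_right (by linarith) (sub_nonneg.2 (one_div_le_one_div_of_le hh₂ hle))
    have hexpand : (R + h / 2) * (1 / h₂ - 1 / h) = R / h₂ - R / h + (h / h₂ - 1) / 2 := by
      field_simp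
    have hlog : Real.log h - Real.log h₂ ≤ h / h₂ - 1 := by
      rw [← Real.log_div hh.ne' hh₂.ne']
      exact Real.log_le_sub_one_of_pos (div_pos hh hh₂)
    linarith

namespace IsWideRectangle

theorem left_lt_right (hR : IsWideRectangle D k x h) (hDk : 0 ≤ D k) : k < x := by
  have hwidth : 0 < 2 * ((x : ℝ) - k) :=
    pos_of_mul_pos_left (hDk.trans_lt hR.lt_area) hR.height_pos.le
  exact_mod_cast (by linarith : (k : ℝ) < x)

theorem two_mul_add_height_le (hR : IsWideRectangle D k x h) (hDk : 0 ≤ D k) :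
    2 * D (x + 1) + h ≤ D (k + 1) := by
  have hkx := hR.left_lt_right hDk
  have hfirst := hR.height_le k ⟨le_rfl, hkx.le⟩
  have hrest := mul_le_sub_of_forall_le_sub_succ (m := k + 1) (n := x + 1) (by omega)
    fun i hi => hR.height_le i ⟨by grind, by grind⟩
  have harea := hR.lt_area
  push_cast at hrest
  linarith

-- While some wide rectangle from `j` ends by `x`, the first inequality passes from `j` to `j + 1`.
-- It cannot hold at `j = x + 1`, so this process stops.
theorem exists_forall_lt_right (hD : ∀ k, 0 ≤ D k) (hanti : Antitone D)
    (hR : IsWideRectangle D k x h) :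
    ∃ j, 2 * D (x + 1) + h ≤ D j ∧ 2 * ((x : ℝ) - j) * h ≤ D j ∧
      ∀ x₂ h₂, IsWideRectangle D j x₂ h₂ → x < x₂ := by
  by_contra! hcon
  have hall : ∀ j ≥ k + 1, 2 * D (x + 1) + h ≤ D j := by
    intro j hj
    induction j, hj using Nat.le_induction with
    | base => exact hR.two_mul_add_height_le (hD k)
    | succ j hj ih =>
      obtain ⟨x', hx', h', hh', hR'⟩ : ∃ x' ≤ x, ∃ h' ≥ h, IsWideRectangle D j x' h' := by
        rcases lt_or_ge (D j) (2 * ((x : ℝ) - j) * h) with hlt | hge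
        · exact ⟨x, le_rfl, h, le_rfl, hR.height_pos,
            fun i hi => hR.height_le i ⟨by grind, hi.2⟩, hlt⟩
        · obtain ⟨x', h', hR', hx'⟩ := hcon j ih hge
          refine ⟨x', hx', h', ?_, hR'⟩
          have hwidth : (0 : ℝ) < x' - j := sub_pos.2 (Nat.cast_lt.2 (hR'.left_lt_right (hD j)))
          have hwidth_le : (x' : ℝ) - j ≤ x - j := sub_le_sub_right (Nat.cast_le.2 hx') _
          by_contra! hlt
          have harea := mul_le_mul hwidth_le hlt.le hR'.height_pos.le (hwidth.le.trans hwidth_le)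
          linarith [hR'.lt_area]
      have hnext := hR'.two_mul_add_height_le (hD j)
      have hmono : D (x + 1) ≤ D (x' + 1) := hanti (Nat.succ_le_succ hx')
      linarith
  have hlast := hall (x + 1) (by have := hR.left_lt_right (hD k); omega)
  linarith [hD (x + 1), hR.height_pos]

theorem exists_forall_rectanglePotential_le (hD : ∀ k, 0 ≤ D k) (hanti : Antitone D)
    (hR : IsWideRectangle D k x h) :
    ∃ j, ∀ x₂ h₂, IsWideRectangle D j x₂ h₂ →
      x < x₂ ∧ rectanglePotential D x₂ h₂ ≤ rectanglePotential D x h := by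
  obtain ⟨j, hRT, hTq, hpast⟩ := hR.exists_forall_lt_right hD hanti
  refine ⟨j, fun x₂ h₂ hR₂ => ?_⟩
  have hx₂ := hpast x₂ h₂ hR₂
  refine ⟨hx₂, ?_⟩
  have hjx : j ≤ x + 1 := by
    by_contra! hlt
    linarith [hanti hlt.le, hD (x + 1), hR.height_pos]
  have hrest := mul_le_sub_of_forall_le_sub_succ (m := x + 1) (n := x₂ + 1) (by omega)
    fun i hi => hR₂.height_le i ⟨by grind, by grind⟩
  push_cast at hrest
  exact div_sub_log_le_of_area_bounds (q := (x : ℝ) - j) (w := (x₂ : ℝ) - x) hR.height_pos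
    hR₂.height_pos (hD _) (sub_nonneg.2 (Nat.cast_le.2 hx₂.le)) hRT hTq
    (by linarith [hR₂.lt_area]) (by linarith)

end IsWideRectangle

theorem exists_not_isWideRectangle (hD : ∀ k, 0 ≤ D k) (hanti : Antitone D) :
    ∃ k, ∀ x h, ¬ IsWideRectangle D k x h := by
  by_contra! hex
  obtain ⟨x₀, h₀, hR₀⟩ := hex 0
  have hfar : ∀ n : ℕ, ∃ k x h, IsWideRectangle D k x h ∧ n ≤ x ∧
      rectanglePotential D x h ≤ rectanglePotential D x₀ h₀ := by
    intro n
    induction n with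
    | zero => exact ⟨0, x₀, h₀, hR₀, x₀.zero_le, le_rfl⟩
    | succ n ih =>
      obtain ⟨k, x, h, hR, hnx, hpot⟩ := ih
      obtain ⟨j, hj⟩ := hR.exists_forall_rectanglePotential_le hD hanti
      obtain ⟨x₂, h₂, hR₂⟩ := hex j
      obtain ⟨hx₂, hpot₂⟩ := hj x₂ h₂ hR₂
      exact ⟨j, x₂, h₂, hR₂, by omega, hpot₂.trans hpot⟩
  obtain ⟨n, hn⟩ := eventually_atTop.1 ((tendsto_sub_succ_of_antitone hD hanti).eventually_lt_const
    (Real.exp_pos (-2 * rectanglePotential D x₀ h₀)))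
  obtain ⟨k, x, h, hR, hnx, hpot⟩ := hfar n
  have hheight : Real.exp (-2 * rectanglePotential D x₀ h₀) ≤ h :=
    (Real.exp_le_exp.2 (by linarith)).trans
      (exp_neg_two_mul_rectanglePotential_le (hD (x + 1)) hR.height_pos)
  linarith [hn x hnx, hR.height_le x ⟨(hR.left_lt_right (hD k)).le, le_rfl⟩]

theorem exists_two_mul_sub_mul_le_of_antitone (hD : ∀ k, 0 ≤ D k) (hanti : Antitone D) :
    ∃ k, ∀ (x : ℕ) (h : ℝ), k ≤ x → (∀ i ∈ Set.Icc k x, h ≤ D i - D (i + 1)) →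
      2 * ((x : ℝ) - k) * h ≤ D k := by
  obtain ⟨k, hk⟩ := exists_not_isWideRectangle hD hanti
  refine ⟨k, fun x h hkx hh => ?_⟩
  by_contra! hlt
  have hwidth : (0 : ℝ) ≤ 2 * (x - k) := by linarith [(Nat.cast_le (α := ℝ)).2 hkx]
  exact hk x h ⟨pos_of_mul_pos_right ((hD k).trans_lt hlt) hwidth, hh, hlt⟩

theorem exists_inf'_le_of_eventually_mul_le_sub_succ {m : ℕ → ℝ} {c : ℝ} (hc : 0 < c)
    (hm : ∀ k, 0 ≤ m k) (hD : ∀ k, 0 ≤ D k)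
    (hdescent : ∀ᶠ k in atTop, c * m k ≤ D k - D (k + 1)) :
    ∃ k₀ : ℕ, ∀ (k : ℕ) (hk : k₀ < k),
      (Finset.Icc k₀ k).inf' (Finset.nonempty_Icc.2 hk.le) m ≤
        D k₀ / (2 * c * ((k : ℝ) - k₀)) := by
  obtain ⟨K, hK⟩ := eventually_atTop.1 hdescent
  obtain ⟨j, hj⟩ := exists_two_mul_sub_mul_le_of_antitone (D := fun k => D (K + k))
    (fun k => hD _) (antitone_nat_of_succ_le fun k =>
      sub_nonneg.1 ((mul_nonneg hc.le (hm _)).trans (hK (K + k) (K.le_add_right k))))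
  refine ⟨K + j, fun k hk => ?_⟩
  set μ := (Finset.Icc (K + j) k).inf' (Finset.nonempty_Icc.2 hk.le) m
  obtain ⟨x, rfl⟩ := Nat.exists_eq_add_of_le (show K ≤ k by omega)
  have hbound : 2 * ((x : ℝ) - j) * (c * μ) ≤ D (K + j) := hj x (c * μ) (by omega) fun i hi =>
    (mul_le_mul_of_nonneg_left (Finset.inf'_le m (by grind)) hc.le).trans (hK (K + i) (by omega))
  have hwidth : (0 : ℝ) < x - j := sub_pos.2 (Nat.cast_lt.2 (by omega))
  push_cast
  rw [add_sub_add_left_eq_sub, le_div_iff₀ (by positivity)]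
  linarith

end WideRectangle

section ExtragradientPlus

variable {E : Type*} [NormedAddCommGroup E] [InnerProductSpace ℝ E]

/-- `z` is a weak Minty solution of the operator `F` with parameter `ρ`. The sign of `ρ` is left
free; `ρ = 0` gives ordinary Minty solutions. -/
def IsWeakMintySolution (F : E → E) (ρ : ℝ) (z : E) : Prop :=
  ∀ u, ⟪F u, u - z⟫ ≥ -(ρ / 2) * ‖F u‖ ^ 2

/-- `u`, `ubar` and `a` are the extrapolated points, the main iterates and the step sizes of a run
of the adaptive EG+ method for `F`. The two clauses for the step size keep the quotient away from a
zero denominator. -/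
structure IsAdaptiveEGPlus (F : E → E) (τ γ : ℝ) (u ubar : ℕ → E) (a : ℕ → ℝ) : Prop where
  stepSize_of_eq : ∀ k, F (u k) = F (ubar k) → a (k + 1) = a k
  stepSize_of_ne : ∀ k, F (u k) ≠ F (ubar k) →
    a (k + 1) = min (a k) (τ * ‖u k - ubar k‖ / ‖F (u k) - F (ubar k)‖)
  extrapolate : ∀ k, u k = ubar k - a k • F (ubar k)
  update : ∀ k, ubar (k + 1) = ubar k - (a k * γ) • F (u k)

theorem norm_sq_extragradient_step_le {x y z f g : E} {α γ ρ : ℝ} (hα : 0 ≤ α) (hγ : 0 ≤ γ)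
    (hy : y = x - α • g) (hweak : -(ρ / 2) * ‖f‖ ^ 2 ≤ ⟪f, y - z⟫) (hfg : ‖f - g‖ ≤ ‖g‖) :
    ‖x - (α * γ) • f - z‖ ^ 2 ≤
      ‖x - z‖ ^ 2 - γ * α * ((1 - γ) * α - ρ) * ‖f‖ ^ 2 := by
  have hinner : ‖f‖ ^ 2 / 2 ≤ ⟪f, g⟫ := by
    have hsq : ‖f - g‖ ^ 2 ≤ ‖g‖ ^ 2 := pow_le_pow_left₀ (norm_nonneg _) hfg 2
    linarith [norm_sub_sq_real f g]
  have hfx : ⟪f, x - z⟫ = ⟪f, y - z⟫ + α * ⟪f, g⟫ := by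
    rw [hy, ← real_inner_smul_right, ← inner_add_right]
    congr 1
    abel
  have hfx_ge : (α - ρ) / 2 * ‖f‖ ^ 2 ≤ ⟪f, x - z⟫ := by
    rw [hfx]
    linarith [mul_le_mul_of_nonneg_left hinner hα]
  calc ‖x - (α * γ) • f - z‖ ^ 2
      = ‖x - z‖ ^ 2 - 2 * (α * γ) * ⟪f, x - z⟫ + (α * γ) ^ 2 * ‖f‖ ^ 2 := by
        rw [sub_right_comm, norm_sub_sq_real, real_inner_smul_right, norm_smul, mul_pow,
          Real.norm_eq_abs, sq_abs, real_inner_comm]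
        ring
    _ ≤ ‖x - z‖ ^ 2 - 2 * (α * γ) * ((α - ρ) / 2 * ‖f‖ ^ 2) + (α * γ) ^ 2 * ‖f‖ ^ 2 := by
        gcongr
    _ = ‖x - z‖ ^ 2 - γ * α * ((1 - γ) * α - ρ) * ‖f‖ ^ 2 := by ring

namespace IsAdaptiveEGPlus

variable {F : E → E} {L ρ τ γ ainf : ℝ} {z : E} {u ubar : ℕ → E} {a : ℕ → ℝ}

theorem antitone_stepSize (hrun : IsAdaptiveEGPlus F τ γ u ubar a) : Antitone a :=
  antitone_nat_of_succ_le fun k => by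
    by_cases heq : F (u k) = F (ubar k)
    · exact (hrun.stepSize_of_eq k heq).le
    · exact (hrun.stepSize_of_ne k heq).trans_le (min_le_left _ _)

theorem div_le_stepSize (hrun : IsAdaptiveEGPlus F τ γ u ubar a) (hL : 0 < L)
    (hLip : ∀ u v, ‖F u - F v‖ ≤ L * ‖u - v‖) (hτ : 0 ≤ τ) (ha0 : τ / L ≤ a 0) (k : ℕ) :
    τ / L ≤ a k := by
  induction k with
  | zero => exact ha0
  | succ k ih =>
    by_cases heq : F (u k) = F (ubar k)
    · rwa [hrun.stepSize_of_eq k heq]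
    · rw [hrun.stepSize_of_ne k heq]
      refine le_min ih ?_
      rw [div_le_div_iff₀ hL (norm_sub_pos_iff.2 heq), mul_assoc, mul_comm _ L]
      exact mul_le_mul_of_nonneg_left (hLip (u k) (ubar k)) hτ

theorem stepSize_succ_mul_norm_sub_le (hrun : IsAdaptiveEGPlus F τ γ u ubar a) (hτ : 0 ≤ τ)
    {k : ℕ} (hak : 0 ≤ a k) :
    a (k + 1) * ‖F (u k) - F (ubar k)‖ ≤ τ * a k * ‖F (ubar k)‖ := by
  by_cases heq : F (u k) = F (ubar k)
  · rw [heq, sub_self, norm_zero, mul_zero]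
    positivity
  · have hnorm : ‖u k - ubar k‖ = a k * ‖F (ubar k)‖ := by
      rw [hrun.extrapolate k, sub_sub_cancel_left, norm_neg, norm_smul, Real.norm_of_nonneg hak]
    rw [mul_assoc, ← hnorm, ← le_div_iff₀ (norm_sub_pos_iff.2 heq)]
    exact (hrun.stepSize_of_ne k heq).trans_le (min_le_right _ _)

theorem eventually_norm_sub_le (hrun : IsAdaptiveEGPlus F τ γ u ubar a) (hτ0 : 0 ≤ τ) (hτ1 : τ < 1)
    (hlim : Tendsto a atTop (𝓝 ainf)) (hainf : 0 < ainf) :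
    ∀ᶠ k in atTop, ‖F (u k) - F (ubar k)‖ ≤ ‖F (ubar k)‖ := by
  have hratio : ∀ᶠ k in atTop, τ * a k < a (k + 1) :=
    (hlim.const_mul τ).eventually_lt (hlim.comp (tendsto_add_atTop_nat 1))
      (mul_lt_of_lt_one_left hainf hτ1)
  filter_upwards [hratio] with k hk
  have hpos (i : ℕ) : 0 < a i := hainf.trans_le (hrun.antitone_stepSize.le_of_tendsto hlim i)
  refine le_of_mul_le_mul_left ?_ (hpos (k + 1))
  exact (hrun.stepSize_succ_mul_norm_sub_le hτ0 (hpos k).le).trans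
    (mul_le_mul_of_nonneg_right hk.le (norm_nonneg _))

theorem eventually_descent (hrun : IsAdaptiveEGPlus F τ γ u ubar a)
    (hz : IsWeakMintySolution F ρ z) (hτ0 : 0 ≤ τ) (hτ1 : τ < 1) (hγ0 : 0 ≤ γ) (hγ1 : γ ≤ 1)
    (hlim : Tendsto a atTop (𝓝 ainf)) (hainf : 0 < ainf) (hgap : ρ ≤ (1 - γ) * ainf) :
    ∀ᶠ k in atTop, γ * ainf * ((1 - γ) * ainf - ρ) * ‖F (u k)‖ ^ 2 ≤
      ‖ubar k - z‖ ^ 2 - ‖ubar (k + 1) - z‖ ^ 2 := by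
  filter_upwards [hrun.eventually_norm_sub_le hτ0 hτ1 hlim hainf] with k hk
  have hle : ainf ≤ a k := hrun.antitone_stepSize.le_of_tendsto hlim k
  have hstep := norm_sq_extragradient_step_le (hainf.le.trans hle) hγ0 (hrun.extrapolate k)
    (hz (u k)) hk
  have hcoef : γ * ainf * ((1 - γ) * ainf - ρ) ≤ γ * a k * ((1 - γ) * a k - ρ) :=
    mul_le_mul (mul_le_mul_of_nonneg_left hle hγ0)
      (sub_le_sub_right (mul_le_mul_of_nonneg_left hle (sub_nonneg.2 hγ1)) ρ)
      (sub_nonneg.2 hgap) (mul_nonneg hγ0 (hainf.le.trans hle))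
  rw [← hrun.update k] at hstep
  linarith [mul_le_mul_of_nonneg_right hcoef (sq_nonneg ‖F (u k)‖)]

theorem exists_inf'_norm_sq_le (hrun : IsAdaptiveEGPlus F τ γ u ubar a)
    (hz : IsWeakMintySolution F ρ z) (hτ0 : 0 ≤ τ) (hτ1 : τ < 1) (hγ0 : 0 < γ) (hγ1 : γ ≤ 1)
    (hlim : Tendsto a atTop (𝓝 ainf)) (hainf : 0 < ainf) (hgap : ρ < (1 - γ) * ainf) :
    ∃ k₀ : ℕ, ∀ (k : ℕ) (hk : k₀ < k),
      (Finset.Icc k₀ k).inf' (Finset.nonempty_Icc.2 hk.le) (fun i => ‖F (u i)‖ ^ 2) ≤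
        ‖ubar k₀ - z‖ ^ 2 / (2 * (γ * ainf * ((1 - γ) * ainf - ρ)) * ((k : ℝ) - k₀)) :=
  exists_inf'_le_of_eventually_mul_le_sub_succ (D := fun k => ‖ubar k - z‖ ^ 2)
    (mul_pos (mul_pos hγ0 hainf) (sub_pos.2 hgap)) (fun _ => sq_nonneg _) (fun _ => sq_nonneg _)
    (hrun.eventually_descent hz hτ0 hτ1 hγ0.le hγ1 hlim hainf hgap.le)

end IsAdaptiveEGPlus

theorem adaptive_eg_plus_convergence_general {F : E → E} {L ρ τ γ ainf : ℝ} {z : E}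
    {u ubar : ℕ → E} {a : ℕ → ℝ} (hrun : IsAdaptiveEGPlus F τ γ u ubar a)
    (hz : IsWeakMintySolution F ρ z) (hL : 0 < L) (hLip : ∀ u v, ‖F u - F v‖ ≤ L * ‖u - v‖)
    (hτ0 : 0 < τ) (hτ1 : τ < 1) (hγ0 : 0 < γ) (hγ1 : γ ≤ 1) (ha0 : τ / L ≤ a 0)
    (hlim : Tendsto a atTop (𝓝 ainf)) (hgap : ρ < (1 - γ) * ainf) :
    ∃ k₀ : ℕ, ∀ (k : ℕ) (hk : k₀ < k),
      (Finset.Icc k₀ k).inf' (Finset.nonempty_Icc.2 hk.le) (fun i => ‖F (u i)‖ ^ 2) ≤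
        1 / ((k : ℝ) - k₀) * (L / (2 * γ * τ * ((1 - γ) * ainf - ρ))) * ‖ubar k₀ - z‖ ^ 2 := by
  have hτL : 0 < τ / L := div_pos hτ0 hL
  have hle : τ / L ≤ ainf := ge_of_tendsto' hlim (hrun.div_le_stepSize hL hLip hτ0.le ha0)
  obtain ⟨k₀, hk₀⟩ :=
    hrun.exists_inf'_norm_sq_le hz hτ0.le hτ1 hγ0 hγ1 hlim (hτL.trans_le hle) hgap
  refine ⟨k₀, fun k hk => (hk₀ k hk).trans ?_⟩
  have hlen : (0 : ℝ) < k - k₀ := sub_pos.2 (Nat.cast_lt.2 hk)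
  have hgap' : 0 < (1 - γ) * ainf - ρ := sub_pos.2 hgap
  calc ‖ubar k₀ - z‖ ^ 2 / (2 * (γ * ainf * ((1 - γ) * ainf - ρ)) * ((k : ℝ) - k₀))
      ≤ ‖ubar k₀ - z‖ ^ 2 / (2 * (γ * (τ / L) * ((1 - γ) * ainf - ρ)) * ((k : ℝ) - k₀)) := by
        gcongr
    _ = 1 / ((k : ℝ) - k₀) * (L / (2 * γ * τ * ((1 - γ) * ainf - ρ))) * ‖ubar k₀ - z‖ ^ 2 := by
        field_simp

end ExtragradientPlus

theorem adaptive_eg_plus_convergence (d : ℕ)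
    (F : EuclideanSpace ℝ (Fin d) → EuclideanSpace ℝ (Fin d))
    (L ρ τ ainf : ℝ) (ustar : EuclideanSpace ℝ (Fin d))
    (hL : 0 < L) (hLip : ∀ u v, ‖F u - F v‖ ≤ L * ‖u - v‖)
    (hρ : 0 < ρ)
    (hweak : ∀ u, ⟪F u, u - ustar⟫ ≥ -(ρ / 2) * ‖F u‖ ^ 2)
    (hτ0 : 0 < τ) (hτ1 : τ < 1)
    (u ubar : ℕ → EuclideanSpace ℝ (Fin d)) (a : ℕ → ℝ)
    (ha0 : τ / L ≤ a 0) (ha0pos : 0 < a 0)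
    (hstep_eq : ∀ k : ℕ, F (u k) = F (ubar k) → a (k + 1) = a k)
    (hstep_ne : ∀ k : ℕ, F (u k) ≠ F (ubar k) →
      a (k + 1) = min (a k) (τ * ‖u k - ubar k‖ / ‖F (u k) - F (ubar k)‖))
    (hu : ∀ k : ℕ, u k = ubar k - a k • F (ubar k))
    (hubar : ∀ k : ℕ, ubar (k + 1) = ubar k - (a k * (1 / 2 : ℝ)) • F (u k))
    (hlim : Filter.Tendsto a Filter.atTop (nhds ainf))
    (hainf : ainf > 2 * ρ) :
    ∃ k₀ : ℕ, ∀ (k : ℕ) (hk : k > k₀),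
      (Finset.Icc k₀ k).inf' (Finset.nonempty_Icc.mpr (le_of_lt hk))
          (fun i => ‖F (u i)‖ ^ 2)
        ≤ (1 / ((k : ℝ) - (k₀ : ℝ))) * (L / (τ * (ainf / 2 - ρ)))
            * ‖ubar k₀ - ustar‖ ^ 2 := by
  obtain ⟨k₀, hk₀⟩ := adaptive_eg_plus_convergence_general (γ := 1 / 2)
    ⟨hstep_eq, hstep_ne, hu, hubar⟩ hweak hL hLip hτ0 hτ1 (by norm_num) (by norm_num) ha0 hlim
    (by linarith)
  exact ⟨k₀, fun k hk => (hk₀ k hk).trans_eq (by ring)⟩
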